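/- In the field ℚ(t) of rational functions, Δ_{2,4,2,4}(t) = P(t)·Or_{2,4,2,4}(t), where P(t) = (1−t⁶)(1−t⁸)/((1−t²)(1−t⁴)(1−t⁴)(1−t³)). (This is the identity ∏_{j=1}^{2} ζ̄_{X,j}(t) = P_{X̃₀}(t)·Or_{X̃₀}(t) of the main theorem for the virtual singularity X = L_{1,−1}, whose dual series has k=0 element K♭_{1,0} with weight system (2,4,4,3; 6,8) and whose Gabrielov numbers are 2,4;2,4.) -/

import Mathlib

/-!
Dividing out the geometric sums `(t ^ n - 1) / (t - 1)` turns `Δ` into a polynomial, which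
factors as `(1 + t)² (1 + t²) (1 + t³) (1 + t⁴)`. On the other side, cancelling the factors
common to `Or` and the denominator of the Poincaré series leaves
`(1 - t⁶)(1 - t⁸)(1 - t²) / ((1 - t³)(1 - t)²)`, which is that same product because
`1 - t⁸ = (1 - t²)(1 + t²)(1 + t⁴)`. The only input besides ring arithmetic is that the
denominators `1 - t ^ n`, `n > 0`, do not vanish in `ℚ(t)` (`one_sub_t_pow_ne_zero`).
-/

open Finset

/-- The generator `t` of the field `ℚ(t)` of rational functions. -/
noncomputable def t : RatFunc ℚ := RatFunc.X

/-- `Δ_{γ₁,γ₂,γ₃,γ₄}(t)`, the characteristic polynomial of the Coxeter element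
corresponding to the graph `S_{γ₁,γ₂,γ₃,γ₄}`. -/
noncomputable def Δ (γ : Fin 4 → ℕ) : RatFunc ℚ :=
  (t ^ 3 - 2 * t ^ 2 - 2 * t + 1) * ∏ i, (t ^ γ i - 1) / (t - 1)
    + t ^ 2 * ∑ i, ((t ^ (γ i - 1) - 1) / (t - 1)) *
        ∏ j ∈ univ.erase i, (t ^ γ j - 1) / (t - 1)

/-- `Or_{γ₁,γ₂,γ₃,γ₄}(t) = (1-t)⁻² · ∏ᵢ (1 - t^{γᵢ})`. -/
noncomputable def Orb (γ : Fin 4 → ℕ) : RatFunc ℚ :=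
  ((1 - t) ^ 2)⁻¹ * ∏ i, (1 - t ^ γ i)

open Polynomial in
theorem one_sub_t_pow_ne_zero {n : ℕ} (hn : 0 < n) : 1 - t ^ n ≠ 0 := by
  intro h
  have hp : algebraMap ℚ[X] (RatFunc ℚ) (1 - X ^ n) = 0 := by
    simpa [t, RatFunc.algebraMap_X] using h
  have hz : (1 - X ^ n : ℚ[X]) = 0 := RatFunc.algebraMap_injective ℚ (by simpa using hp)
  -- Evaluate at `2`, where `2 ^ n > 1`.
  have he : (1 : ℚ) - 2 ^ n = 0 := by simpa using congrArg (eval 2) hz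
  linarith [one_lt_pow₀ (one_lt_two : (1 : ℚ) < 2) hn.ne']

/-- The main theorem for the virtual singularity `L_{1,-1}` (Gabrielov numbers
`2,4;2,4`; dual `k=0` element `K♭_{1,0}` with weight system `(2,4,4,3;6,8)`). -/
theorem stmt_15 :
    Δ ![2, 4, 2, 4]
      = (1 - t ^ 6) * (1 - t ^ 8) /
          ((1 - t ^ 2) * (1 - t ^ 4) * (1 - t ^ 4) * (1 - t ^ 3))
        * Orb ![2, 4, 2, 4] := by
  have h1 : t - 1 ≠ 0 := by
    rw [← neg_sub]
    simpa only [pow_one] using neg_ne_zero.mpr (one_sub_t_pow_ne_zero one_pos)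
  have h1' : 1 - t ≠ 0 := by simpa using one_sub_t_pow_ne_zero one_pos
  have h2 := one_sub_t_pow_ne_zero two_pos
  have h3 := one_sub_t_pow_ne_zero three_pos
  have h4 := one_sub_t_pow_ne_zero four_pos
  have e0 : univ.erase (0 : Fin 4) = {1, 2, 3} := by decide
  have e1 : univ.erase (1 : Fin 4) = {0, 2, 3} := by decide
  have e2 : univ.erase (2 : Fin 4) = {0, 1, 3} := by decide
  have e3 : univ.erase (3 : Fin 4) = {0, 1, 2} := by decide
  -- The graph side as a polynomial, by dividing out each geometric sum.
  have q2 : (t ^ 2 - 1) / (t - 1) = 1 + t := by field_simp; ring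
  have q3 : (t ^ 3 - 1) / (t - 1) = 1 + t + t ^ 2 := by field_simp; ring
  have q4 : (t ^ 4 - 1) / (t - 1) = (1 + t) * (1 + t ^ 2) := by field_simp; ring
  have hΔ : Δ ![2, 4, 2, 4] = (1 + t) ^ 2 * (1 + t ^ 2) * (1 + t ^ 3) * (1 + t ^ 4) := by
    simp [Δ, Fin.sum_univ_four, Fin.prod_univ_four, e0, e1, e2, e3, q2, q3, q4, div_self h1, -Finset.prod_div_distrib]
    ring
  rw [hΔ]
  simp only [Orb, Fin.prod_univ_four, Matrix.cons_val]
  field_simp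
  ring
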